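/- arXiv:1003.5353 — 2 statements merged into one kernel-verified Lean document; each statement's English description precedes it below -/
import Mathlib

section
/- For every nonzero integer m, every integer i, every nonnegative integer r, and every integer s with s > 2r, the following identity holds in ℚ: Σ_{p=0}^{s} (-1)^p · [i+m; p]_m · [i+(r-p-2)m; r]_m · [i+(r-p+1)m; s-p]_m = 0. -/
/-!
Write `⟨a⟩_n = a(a-k)⋯(a-(n-1)k)` with `k = m`, and put `a = i + m`, `y = a + (r-p)k`.
The factors of `⟨a⟩_p ⟨y⟩_{s-p}` regroup as `⟨a⟩_{s-r} ⟨y⟩_r` (`stepFall_regroup`). Hence the `p`-th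
summand is a constant independent of `p` times `(-1)^p C(s,p) ⟨i+(r-p-2)k⟩_r ⟨y⟩_r`. The last two
factors form a polynomial in `p` of degree at most `2r < s`, so the alternating binomial sum is an
`s`-th finite difference of a polynomial of degree less than `s` and vanishes.
-/

/- Generalized binomial coefficient [a; r]_k = a(a-k)(a-2k)⋯(a-(r-1)k)/r!, with [a; 0]_k = 1. -/
noncomputable def gb (a k : ℚ) (r : ℕ) : ℚ :=
  (∏ j ∈ Finset.range r, (a - (j : ℚ) * k)) / (r.factorial : ℚ)

/-- The falling factorial with step `k`: `a (a - k) ⋯ (a - (n - 1) k)`. -/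
def stepFall (a k : ℚ) (n : ℕ) : ℚ := ∏ j ∈ Finset.range n, (a - (j : ℚ) * k)

lemma gb_eq (a k : ℚ) (n : ℕ) : gb a k n = stepFall a k n / (n.factorial : ℚ) := rfl

lemma stepFall_add (a k : ℚ) (p q : ℕ) :
    stepFall a k (p + q) = stepFall a k p * stepFall (a - p * k) k q := by
  unfold stepFall
  rw [Finset.prod_range_add]
  congr 1
  refine Finset.prod_congr rfl fun j _ => ?_
  push_cast
  ring

/-- Regrouping of the factors, which moves all dependence on `p` into a product of fixed
length `r`. -/
lemma stepFall_regroup (a k : ℚ) {r s p : ℕ} (hrs : r ≤ s) (hp : p ≤ s) :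
    stepFall a k p * stepFall (a + ((r : ℚ) - p) * k) k (s - p) =
      stepFall a k (s - r) * stepFall (a + ((r : ℚ) - p) * k) k r := by
  rcases le_total r (s - p) with h | h
  · obtain ⟨t, ht⟩ := Nat.exists_eq_add_of_le h
    have h2 : s - r = p + t := by omega
    rw [ht, h2, stepFall_add _ k r t, stepFall_add a k p t,
      show a + ((r : ℚ) - p) * k - r * k = a - p * k by ring]
    ring
  · obtain ⟨q, rfl⟩ := Nat.exists_eq_add_of_le hp
    obtain ⟨t, rfl⟩ := Nat.exists_eq_add_of_le h
    simp only [Nat.add_sub_cancel_left] at *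
    obtain ⟨u, rfl⟩ : ∃ u, p = u + t := ⟨p - t, by omega⟩
    rw [show u + t + q - (q + t) = u by omega, stepFall_add a k u t, stepFall_add _ k q t,
      show a + (((q + t : ℕ) : ℚ) - ((u + t : ℕ) : ℚ)) * k - q * k = a - u * k by
        push_cast; ring]
    ring

lemma alternating_sum_choose_mul_eval (P : Polynomial ℚ) {s : ℕ} (hP : P.natDegree < s) :
    ∑ p ∈ Finset.range (s + 1), (-1 : ℚ) ^ p * (s.choose p : ℚ) * P.eval (p : ℚ) = 0 := by
  have h := congrFun (Polynomial.fwdDiff_iter_eq_zero_of_degree_lt hP) 0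
  rw [fwdDiff_iter_eq_sum_shift] at h
  have h2 := congrArg (fun z => (-1 : ℚ) ^ s * z) h
  simp only [Pi.zero_apply, mul_zero, Finset.mul_sum] at h2
  rw [← h2]
  refine Finset.sum_congr rfl fun p hp => ?_
  obtain ⟨q, rfl⟩ := Nat.exists_eq_add_of_le (Nat.lt_succ_iff.mp (Finset.mem_range.mp hp))
  have hq : (-1 : ℚ) ^ q * (-1) ^ q = 1 := by rw [← mul_pow]; simp
  simp only [Nat.add_sub_cancel_left, zsmul_eq_mul, zero_add, nsmul_eq_mul, mul_one, pow_add]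
  push_cast
  linear_combination (-(-1 : ℚ) ^ p * ((p + q).choose p : ℚ) * P.eval (p : ℚ)) * hq

/-- As a function of `x`, `⟨b - x k⟩_n` is a polynomial of degree at most `n`. -/
lemma exists_poly_stepFall (b k : ℚ) (n : ℕ) :
    ∃ P : Polynomial ℚ, P.natDegree ≤ n ∧ ∀ x : ℚ, P.eval x = stepFall (b - x * k) k n := by
  refine ⟨∏ j ∈ Finset.range n,
    (Polynomial.C (-k) * Polynomial.X + Polynomial.C (b - (j : ℚ) * k)), ?_, fun x => ?_⟩
  · refine (Polynomial.natDegree_prod_le _ _).trans ?_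
    refine (Finset.sum_le_sum fun j _ => Polynomial.natDegree_linear_le).trans ?_
    simp
  · rw [Polynomial.eval_prod]
    refine Finset.prod_congr rfl fun j _ => ?_
    simp only [Polynomial.eval_add, Polynomial.eval_mul, Polynomial.eval_C, Polynomial.eval_X]
    ring

/-- For every nonzero integer `m`, every integer `i`, every nonnegative integer `r`, and every
integer `s` with `s > 2r`:
`Σ_{p=0}^{s} (-1)^p · [i+m; p]_m · [i+(r-p-2)m; r]_m · [i+(r-p+1)m; s-p]_m = 0` in `ℚ`. -/
theorem stmt0 (m : ℤ) (hm : m ≠ 0) (i : ℤ) (r : ℕ) (s : ℕ) (hs : 2 * r < s) :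
    ∑ p ∈ Finset.range (s + 1),
      (-1 : ℚ) ^ p * gb ((i : ℚ) + (m : ℚ)) (m : ℚ) p *
        gb ((i : ℚ) + ((r : ℚ) - (p : ℚ) - 2) * (m : ℚ)) (m : ℚ) r *
        gb ((i : ℚ) + ((r : ℚ) - (p : ℚ) + 1) * (m : ℚ)) (m : ℚ) (s - p) = 0 := by
  obtain ⟨P, hP, hPe⟩ := exists_poly_stepFall ((i : ℚ) + ((r : ℚ) - 2) * m) m r
  obtain ⟨Q, hQ, hQe⟩ := exists_poly_stepFall ((i : ℚ) + ((r : ℚ) + 1) * m) m r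
  have hdeg : (P * Q).natDegree < s := by
    have := Polynomial.natDegree_mul_le (p := P) (q := Q)
    omega
  rw [← mul_zero (stepFall ((i : ℚ) + m) m (s - r) / ((r.factorial : ℚ) * s.factorial)),
    ← alternating_sum_choose_mul_eval (P * Q) hdeg, Finset.mul_sum]
  refine Finset.sum_congr rfl fun p hp => ?_
  have hps : p ≤ s := Nat.lt_succ_iff.mp (Finset.mem_range.mp hp)
  have hreg := stepFall_regroup ((i : ℚ) + m) m (r := r) (by omega) hps
  rw [show (i : ℚ) + m + ((r : ℚ) - p) * m = (i : ℚ) + ((r : ℚ) - p + 1) * m by ring] at hreg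
  rw [Polynomial.eval_mul, hPe, hQe, Nat.cast_choose ℚ hps,
    show (i : ℚ) + ((r : ℚ) - 2) * m - p * m = (i : ℚ) + ((r : ℚ) - p - 2) * m by ring,
    show (i : ℚ) + ((r : ℚ) + 1) * m - p * m = (i : ℚ) + ((r : ℚ) - p + 1) * m by ring]
  simp only [gb_eq]
  have h1 : (r.factorial : ℚ) ≠ 0 := by positivity
  have h2 : (s.factorial : ℚ) ≠ 0 := by positivity
  have h3 : (p.factorial : ℚ) ≠ 0 := by positivity
  have h4 : ((s - p).factorial : ℚ) ≠ 0 := by positivity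
  -- Atoms keep `field_simp` from rewriting inside the arguments of `stepFall`.
  generalize stepFall ((i : ℚ) + ((r : ℚ) - p - 2) * m) m r = A at *
  generalize stepFall ((i : ℚ) + ((r : ℚ) - p + 1) * m) m r = B at *
  generalize stepFall ((i : ℚ) + ((r : ℚ) - p + 1) * m) m (s - p) = D at *
  field_simp
  linear_combination A * hreg
end

section
/- For every nonzero integer m, every half-integer k ∈ (1/2)ℤ, every nonnegative integer r, and every integer s with s > 2r, the following identity holds in ℚ: Σ_{p=0}^{s} (-1)^p · [k+m/2; p]_m · [k+(r-p-3/2)m; r]_m · [k+(r-p+1/2)m; s-p]_m = 0. -/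
/-- The `s`-th finite difference at `0` of a polynomial of degree less than `s` vanishes. -/
lemma alternating_sum_eq_zero (Q : Polynomial ℚ) (s : ℕ) (hQ : Q.natDegree < s) :
    ∑ p ∈ Finset.range (s + 1), (-1 : ℚ) ^ p * (s.choose p : ℚ) * Q.eval (p : ℚ) = 0 := by
  have h := congrFun (Polynomial.fwdDiff_iter_eq_zero_of_degree_lt hQ) 0
  rw [fwdDiff_iter_eq_sum_shift] at h
  have h2 : ∑ p ∈ Finset.range (s + 1), (-1 : ℚ) ^ p * (s.choose p : ℚ) * Q.eval (p : ℚ)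
      = (-1) ^ s * ∑ k ∈ Finset.range (s + 1),
        ((-1 : ℤ) ^ (s - k) * s.choose k) • Q.eval (0 + k • (1 : ℚ)) := by
    rw [Finset.mul_sum]
    refine Finset.sum_congr rfl fun p hp => ?_
    obtain ⟨t, rfl⟩ := Nat.exists_eq_add_of_le (Nat.lt_succ_iff.mp (Finset.mem_range.mp hp))
    have ht : ((-1 : ℚ) ^ t) * (-1) ^ t = 1 := by rw [← mul_pow]; norm_num
    rw [Nat.add_sub_cancel_left, pow_add]
    simp only [zsmul_eq_mul, nsmul_eq_mul, mul_one, zero_add]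
    push_cast
    linear_combination (-(-1 : ℚ) ^ p * ((p + t).choose p : ℚ) * Q.eval (p : ℚ)) * ht
  rw [h2, h]
  simp

/-- Recombination of the two arithmetic-progression products into a factor independent of `p`
and a factor consisting of `r` terms linear in `p`. -/
lemma prod_recombine (a m : ℚ) (r s p : ℕ) (hr : r ≤ s) (hp : p ≤ s) :
    (∏ j ∈ Finset.range p, (a - (j : ℚ) * m)) *
        (∏ j ∈ Finset.range (s - p), (a + ((r : ℚ) - p) * m - (j : ℚ) * m)) =
      (∏ j ∈ Finset.range (s - r), (a - (j : ℚ) * m)) *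
        (∏ j ∈ Finset.range r, (a + ((r : ℚ) - p) * m - (j : ℚ) * m)) := by
  rcases le_total (p + r) s with h | h
  · obtain ⟨t, rfl⟩ := Nat.exists_eq_add_of_le h
    rw [show p + r + t - p = r + t by omega, show p + r + t - r = p + t by omega,
      Finset.prod_range_add, Finset.prod_range_add]
    have : ∏ x ∈ Finset.range t, (a + ((r : ℚ) - p) * m - ((r + x : ℕ) : ℚ) * m) =
        ∏ x ∈ Finset.range t, (a - ((p + x : ℕ) : ℚ) * m) :=
      Finset.prod_congr rfl fun x _ => by push_cast; ring
    rw [this]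
    ring
  · -- `u = s - r`, `v = s - p`, and `t` is the number of shared factors
    obtain ⟨u, rfl⟩ := Nat.exists_eq_add_of_le hr
    obtain ⟨v, hv⟩ := Nat.exists_eq_add_of_le hp
    obtain ⟨t, rfl⟩ := Nat.exists_eq_add_of_le (show u ≤ p by omega)
    obtain rfl : r = v + t := by omega
    rw [show v + t + u - (u + t) = v by omega, show v + t + u - (v + t) = u by omega,
      Finset.prod_range_add _ u t, Finset.prod_range_add _ v t]
    have : ∏ x ∈ Finset.range t,
          (a + (((v + t : ℕ) : ℚ) - ((u + t : ℕ) : ℚ)) * m - ((v + x : ℕ) : ℚ) * m) =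
        ∏ x ∈ Finset.range t, (a - ((u + x : ℕ) : ℚ) * m) :=
      Finset.prod_congr rfl fun x _ => by push_cast; ring
    rw [this]
    ring

/-- A product of `r` linear factors `b - p * m - j * m`, as a polynomial in `p`. -/
noncomputable def linProd (b m : ℚ) (r : ℕ) : Polynomial ℚ :=
  ∏ j ∈ Finset.range r, (Polynomial.C (-m) * Polynomial.X + Polynomial.C (b - (j : ℚ) * m))

lemma natDegree_linProd_le (b m : ℚ) (r : ℕ) : (linProd b m r).natDegree ≤ r := by
  refine (Polynomial.natDegree_prod_le _ _).trans ?_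
  refine (Finset.sum_le_sum fun j _ => Polynomial.natDegree_linear_le).trans ?_
  simp

lemma eval_linProd (b m x : ℚ) (r : ℕ) :
    (linProd b m r).eval x = ∏ j ∈ Finset.range r, (b - x * m - (j : ℚ) * m) := by
  rw [linProd, Polynomial.eval_prod]
  refine Finset.prod_congr rfl fun j _ => ?_
  simp only [Polynomial.eval_add, Polynomial.eval_mul, Polynomial.eval_C, Polynomial.eval_X]
  ring

/-- For every nonzero integer `m`, every half-integer `k = n/2` (`n ∈ ℤ`), every nonnegative
integer `r`, and every integer `s` with `s > 2r`:
`Σ_{p=0}^{s} (-1)^p · [k+m/2; p]_m · [k+(r-p-3/2)m; r]_m · [k+(r-p+1/2)m; s-p]_m = 0` in `ℚ`. -/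
theorem stmt1 (m : ℤ) (hm : m ≠ 0) (n : ℤ) (r : ℕ) (s : ℕ) (hs : 2 * r < s) :
    ∑ p ∈ Finset.range (s + 1),
      (-1 : ℚ) ^ p * gb ((n : ℚ) / 2 + (m : ℚ) / 2) (m : ℚ) p *
        gb ((n : ℚ) / 2 + ((r : ℚ) - (p : ℚ) - 3 / 2) * (m : ℚ)) (m : ℚ) r *
        gb ((n : ℚ) / 2 + ((r : ℚ) - (p : ℚ) + 1 / 2) * (m : ℚ)) (m : ℚ) (s - p) = 0 := by
  set a : ℚ := (n : ℚ) / 2 + (m : ℚ) / 2 with ha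
  set Q : Polynomial ℚ :=
    linProd (a + (r : ℚ) * m) m r * linProd (a + ((r : ℚ) - 2) * m) m r with hQdef
  have hQ : Q.natDegree < s := by
    have h1 := natDegree_linProd_le (a + (r : ℚ) * m) m r
    have h2 := natDegree_linProd_le (a + ((r : ℚ) - 2) * m) m r
    have h3 : Q.natDegree ≤ _ := Polynomial.natDegree_mul_le
    omega
  have key := alternating_sum_eq_zero Q s hQ
  rw [← mul_zero ((∏ j ∈ Finset.range (s - r), (a - (j : ℚ) * m)) /
    ((s.factorial : ℚ) * (r.factorial : ℚ))), ← key, Finset.mul_sum]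
  refine Finset.sum_congr rfl fun p hp => ?_
  have hps : p ≤ s := Nat.lt_succ_iff.mp (Finset.mem_range.mp hp)
  have hrec := prod_recombine a m r s p (by omega) hps
  have e1 : (n : ℚ) / 2 + ((r : ℚ) - p + 1 / 2) * m = a + ((r : ℚ) - p) * m := by
    rw [ha]; ring
  have e2 : (n : ℚ) / 2 + ((r : ℚ) - p - 3 / 2) * m = a + ((r : ℚ) - 2) * m - p * m := by
    rw [ha]; ring
  have e3 : a + (r : ℚ) * m - p * m = a + ((r : ℚ) - p) * m := by ring
  rw [e1, e2, hQdef, Polynomial.eval_mul, eval_linProd, eval_linProd, e3,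
    Nat.cast_choose ℚ hps]
  simp only [gb]
  have f1 : (s.factorial : ℚ) ≠ 0 := by positivity
  have f2 : (r.factorial : ℚ) ≠ 0 := by positivity
  have f3 : (p.factorial : ℚ) ≠ 0 := by positivity
  have f4 : ((s - p).factorial : ℚ) ≠ 0 := by positivity
  generalize ∏ j ∈ Finset.range r, (a + ((r : ℚ) - 2) * m - p * m - (j : ℚ) * m) = M
  generalize ∏ j ∈ Finset.range p, (a - (j : ℚ) * m) = A at *
  generalize ∏ j ∈ Finset.range (s - p), (a + ((r : ℚ) - p) * m - (j : ℚ) * m) = B at *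
  generalize ∏ j ∈ Finset.range (s - r), (a - (j : ℚ) * m) = C at *
  generalize ∏ j ∈ Finset.range r, (a + ((r : ℚ) - p) * m - (j : ℚ) * m) = D at *
  field_simp
  linear_combination M * hrec
end
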